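/- For every integer n > 1, the menage number M_n (the number of seating arrangements of n couples around a circular table with labeled seats such that men and women alternate and no couple sits adjacently) satisfies M_n = 2 * n! * sum over j from 0 to n of (-1)^j * (n-j)! * (2n/(2n-j)) * binomial(2n-j, j) (the Touchard formula). -/

import Mathlib

/-- The menage number `M n`: the number of ways to seat `n` couples (each couple consisting
of a woman, `(i, false)`, and a man, `(i, true)`) on `2n` labeled seats around a circular
table so that genders alternate and no couple occupies adjacent seats. A seating is a
bijection from seats `ZMod (2n)` to people `Fin n × Bool`; seats `i` and `i+1` are adjacent. -/
noncomputable def menageNumber (n : ℕ) : ℕ :=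
  Nat.card {s : ZMod (2 * n) ≃ (Fin n × Bool) //
    ∀ i : ZMod (2 * n), (s i).2 ≠ (s (i + 1)).2 ∧ (s i).1 ≠ (s (i + 1)).1}

/-!
Once the genders of the two parity classes of seats and the places `w` of the first class are fixed,
a seating is a permutation `σ` of `ZMod n` with `σ i ≠ i` and `σ i ≠ i + 1`. The `2 n` forbidden
cells `(i, i)` and `(i, i + 1)`, listed cyclically, form a staircase: two of them share a row or a
column exactly when they are consecutive. So the rook numbers of this board count the subsets of a
cycle without consecutive elements, and inclusion–exclusion over placements of rooks gives the
formula.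
-/

open Finset Equiv
open scoped Nat

section Rooks

variable {α β ι : Type*}

lemma card_filter_powersetCard_map (f : α ↪ β) (s : Finset α) (k : ℕ) (P : Finset β → Prop)
    [DecidablePred P] :
    #{T ∈ (s.map f).powersetCard k | P T} = #{S ∈ s.powersetCard k | P (S.map f)} := by
  rw [powersetCard_map, filter_map, card_map]
  rfl

/-- A placement of rooks on the cells `T` of a chessboard with rows `α` and columns `β` is
non-attacking if no two rooks share a row or a column. -/
def IsNonAttacking (T : Finset (α × β)) : Prop :=
  Set.InjOn Prod.fst (T : Set (α × β)) ∧ Set.InjOn Prod.snd (T : Set (α × β))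

instance [DecidableEq α] [DecidableEq β] :
    DecidablePred (IsNonAttacking : Finset (α × β) → Prop) :=
  fun _ => instDecidableAnd

/-- The rook number `r_k` of a board `B`: the number of non-attacking placements of `k` rooks on
cells of `B`. -/
def rookNumber [DecidableEq α] [DecidableEq β] (B : Finset (α × β)) (k : ℕ) : ℕ :=
  #{T ∈ B.powersetCard k | IsNonAttacking T}

lemma IsNonAttacking.card_le [Fintype α] {T : Finset (α × β)} (hT : IsNonAttacking T) :
    #T ≤ Fintype.card α := by
  classical exact card_image_of_injOn hT.1 ▸ card_le_univ _

lemma isNonAttacking_of_perm {T : Finset (α × α)} {σ : Perm α} (hσ : ∀ p ∈ T, σ p.1 = p.2) :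
    IsNonAttacking T := by
  refine ⟨fun p hp q hq h => Prod.ext h ?_, fun p hp q hq h => Prod.ext (σ.injective ?_) h⟩
  · rw [← hσ p hp, ← hσ q hq, h]
  · rw [hσ p hp, hσ q hq, h]

variable [Fintype α] [DecidableEq α]

lemma card_perm_extending [Fintype ι] {a b : ι → α}
    (ha : Function.Injective a) (hb : Function.Injective b) :
    #{σ : Perm α | ∀ i, σ (a i) = b i} = (Fintype.card α - Fintype.card ι)! := by
  classical
  obtain ⟨σ₀, hσ₀⟩ := Perm.exists_extending_pair a b ha hb
  have translate (σ : Perm α) : (∀ i, σ (a i) = b i) ↔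
      ∀ x, ¬ x ∉ Set.range a → (Equiv.mulLeft σ₀⁻¹ σ) x = x := by
    simp [← hσ₀, Equiv.symm_apply_eq]
  rw [← Fintype.card_subtype, Fintype.card_congr ((Equiv.mulLeft σ₀⁻¹).subtypeEquiv
      (q := fun τ => ∀ x, ¬ x ∉ Set.range a → τ x = x) translate),
    ← Fintype.card_congr (Perm.subtypeEquivSubtypePerm (· ∉ Set.range a)), Fintype.card_perm,
    Fintype.card_subtype_compl]
  congr 2
  exact Set.card_range_of_injective ha

lemma card_perm_through (T : Finset (α × α)) :
    #{σ : Perm α | ∀ p ∈ T, σ p.1 = p.2} =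
      if IsNonAttacking T then (Fintype.card α - #T)! else 0 := by
  split_ifs with hT
  · simpa using card_perm_extending (ι := T) hT.1.injective hT.2.injective
  · exact card_eq_zero.2 (filter_false_of_mem fun σ _ hσ => hT (isNonAttacking_of_perm hσ))

theorem card_perm_avoiding (B : Finset (α × α)) :
    (#{σ : Perm α | ∀ p ∈ B, σ p.1 ≠ p.2} : ℤ) =
      ∑ k ∈ range (Fintype.card α + 1), (-1 : ℤ) ^ k * (Fintype.card α - k)! * rookNumber B k := by
  calc (#{σ : Perm α | ∀ p ∈ B, σ p.1 ≠ p.2} : ℤ)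
    _ = #(B.inf fun p => ({σ : Perm α | σ p.1 = p.2} : Finset (Perm α))ᶜ) := by
        congr 2; ext σ; simp [mem_inf]
    _ = ∑ T ∈ B.powerset, (-1 : ℤ) ^ #T * #{σ : Perm α | ∀ p ∈ T, σ p.1 = p.2} := by
        rw [inclusion_exclusion_card_inf_compl]
        congr! with T; ext σ; simp [mem_inf]
    _ = ∑ T ∈ B.powerset with IsNonAttacking T, (-1 : ℤ) ^ #T * (Fintype.card α - #T)! := by
        simp only [card_perm_through, Nat.cast_ite, Nat.cast_zero, mul_ite, mul_zero, sum_filter]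
    _ = ∑ k ∈ range (Fintype.card α + 1), ∑ T ∈ B.powerset with IsNonAttacking T ∧ #T = k,
          (-1 : ℤ) ^ #T * (Fintype.card α - #T)! := by
        simp only [← filter_filter]
        refine (sum_fiberwise_of_maps_to (fun T hT => ?_) _).symm
        exact mem_range_succ_iff.2 (mem_filter.1 hT).2.card_le
    _ = ∑ k ∈ range (Fintype.card α + 1),
          (-1 : ℤ) ^ k * (Fintype.card α - k)! * rookNumber B k := by
        refine sum_congr rfl fun k _ => ?_
        rw [rookNumber, powersetCard_eq_filter, filter_comm, filter_filter, mul_comm _ (#_ : ℤ),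
          ← nsmul_eq_mul, ← sum_const]
        exact sum_congr rfl fun T hT => by rw [(mem_filter.1 hT).2.2]

end Rooks

section ConsecutiveFree

/-- A set of integers, or of residues, is free of consecutive elements if it never contains both
`x` and `x + 1`; for residues this includes the wrap-around pair `-1, 0`. -/
def IsConsecutiveFree {α : Type*} [Add α] [One α] (S : Finset α) : Prop :=
  ∀ x ∈ S, x + 1 ∉ S

instance {α : Type*} [Add α] [One α] [DecidableEq α] :
    DecidablePred (IsConsecutiveFree : Finset α → Prop) :=
  fun _ => decidableDforallFinset

lemma isConsecutiveFree_insert_iff {m : ℕ} {S : Finset ℕ} (hS : S ⊆ range m) :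
    IsConsecutiveFree (insert m S) ↔ IsConsecutiveFree S ∧ S ⊆ range (m - 1) := by
  have hlt (x : ℕ) (hx : x ∈ S) : x < m := mem_range.1 (hS hx)
  simp only [IsConsecutiveFree, mem_insert, subset_iff, mem_range]
  grind

lemma card_consecutiveFree_range_succ (m k : ℕ) :
    #{S ∈ (range (m + 1)).powersetCard (k + 1) | IsConsecutiveFree S} =
      #{S ∈ (range m).powersetCard (k + 1) | IsConsecutiveFree S} +
        #{S ∈ (range (m - 1)).powersetCard k | IsConsecutiveFree S} := by
  have notMem {S : Finset ℕ} (hS : S ⊆ range m) : m ∉ S := fun h => notMem_range_self (hS h)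
  rw [range_add_one, powersetCard_succ_insert notMem_range_self, filter_union,
    card_union_of_disjoint, filter_image, card_image_of_injOn]
  · congr 2
    ext S
    simp only [mem_filter, mem_powersetCard]
    have := range_subset_range.2 (m.sub_le 1)
    grind [isConsecutiveFree_insert_iff]
  · intro S hS T hT hST
    simp only [coe_filter, mem_powersetCard, Set.mem_ofPred_eq] at hS hT
    rw [← erase_insert (notMem hS.1.1), hST, erase_insert (notMem hT.1.1)]
  · rw [disjoint_left]
    grind

theorem card_consecutiveFree_range (m k : ℕ) :
    #{S ∈ (range m).powersetCard k | IsConsecutiveFree S} = (m + 1 - k).choose k := by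
  induction m using Nat.strong_induction_on generalizing k with
  | _ m ih =>
    rcases k with _ | k
    · simp [IsConsecutiveFree, filter_singleton]
    rcases m with _ | m
    · simp
    rw [card_consecutiveFree_range_succ, ih m (by lia), ih (m - 1) (by lia)]
    rcases lt_or_ge m k with hmk | hkm
    · simp only [Nat.choose_eq_zero_of_lt, show m + 1 - (k + 1) < k + 1 by lia,
        show m - 1 + 1 - k < k by lia, show m + 1 + 1 - (k + 1) < k + 1 by lia]
    · have hshift : (m - 1 + 1 - k).choose k = (m - k).choose k := by
        rcases m with _ | m
        · simp [Nat.le_zero.1 hkm]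
        · rfl
      rw [hshift, Nat.add_sub_add_right, Nat.add_sub_add_right, Nat.sub_add_comm hkm,
        Nat.choose_succ_succ', add_comm]

variable {N : ℕ} [NeZero N]

lemma val_add_one_of_ne_neg_one {x : ZMod N} (hx : x ≠ -1) : (x + 1).val = x.val + 1 := by
  have hlt : x.val + 1 < N := by
    refine lt_of_le_of_ne (ZMod.val_lt x) fun h => hx (eq_neg_of_add_eq_zero_left ?_)
    simpa using congrArg (Nat.cast : ℕ → ZMod N) h
  rw [← ZMod.val_cast_of_lt hlt, Nat.cast_add, ZMod.natCast_zmod_val, Nat.cast_one]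

lemma map_val_erase_neg_one :
    ((univ : Finset (ZMod N)).erase (-1)).map ⟨ZMod.val, ZMod.val_injective N⟩ = range (N - 1) := by
  refine eq_of_subset_of_card_le (fun y hy => ?_) (by simp [ZMod.card])
  obtain ⟨x, hx, rfl⟩ := mem_map.1 hy
  have := val_add_one_of_ne_neg_one (ne_of_mem_erase hx) ▸ ZMod.val_lt (x + 1)
  exact mem_range.2 (Nat.lt_sub_of_add_lt this)

lemma isConsecutiveFree_map_val_iff {S : Finset (ZMod N)} (hS : -1 ∉ S) :
    IsConsecutiveFree (S.map ⟨ZMod.val, ZMod.val_injective N⟩) ↔ IsConsecutiveFree S := by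
  simp only [IsConsecutiveFree, forall_mem_map]
  refine forall₂_congr fun x hx => ?_
  have hval := val_add_one_of_ne_neg_one (ne_of_mem_of_not_mem hx hS)
  exact not_congr (hval ▸ mem_map' ⟨ZMod.val, ZMod.val_injective N⟩)

lemma card_consecutiveFree_neg_one_notMem (k : ℕ) :
    #{S ∈ (univ : Finset (ZMod N)).powersetCard k | IsConsecutiveFree S ∧ -1 ∉ S} =
      (N - k).choose k := by
  have hN : N - 1 + 1 = N := Nat.sub_add_cancel NeZero.one_le
  conv_rhs => rw [← hN, ← card_consecutiveFree_range, ← map_val_erase_neg_one,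
    card_filter_powersetCard_map]
  congr 1
  ext S
  simp only [mem_filter, mem_powersetCard, subset_univ, subset_erase, true_and]
  grind [isConsecutiveFree_map_val_iff]

lemma isConsecutiveFree_map_addRight_iff {G : Type*} [AddCommGroup G] [One G]
    {S : Finset G} (c : G) :
    IsConsecutiveFree (S.map (Equiv.addRight c).toEmbedding) ↔ IsConsecutiveFree S := by
  simp only [IsConsecutiveFree, forall_mem_map]
  refine forall₂_congr fun x _ => not_congr ?_
  simp [mem_map_equiv, add_right_comm]

lemma card_consecutiveFree_notMem (k : ℕ) (x : ZMod N) :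
    #{S ∈ (univ : Finset (ZMod N)).powersetCard k | IsConsecutiveFree S ∧ x ∉ S} =
      (N - k).choose k := by
  rw [← card_consecutiveFree_neg_one_notMem]
  refine card_equiv (Equiv.addRight (-1 - x)).finsetCongr fun S => ?_
  simp [isConsecutiveFree_map_addRight_iff]

theorem card_consecutiveFree_zmod_mul (k : ℕ) :
    #{S ∈ (univ : Finset (ZMod N)).powersetCard k | IsConsecutiveFree S} * (N - k) =
      N * (N - k).choose k := by
  set F := {S ∈ (univ : Finset (ZMod N)).powersetCard k | IsConsecutiveFree S} with hF
  have card_notMem (S : Finset (ZMod N)) (hS : S ∈ F) : #{x | x ∉ S} = N - k := by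
    rw [hF, mem_filter, mem_powersetCard] at hS
    rw [filter_notMem_eq_sdiff, ← compl_eq_univ_sdiff, card_compl, ZMod.card, hS.1.2]
  calc #F * (N - k)
    _ = ∑ S ∈ F, #{x | x ∉ S} := (sum_const_nat card_notMem).symm
    _ = ∑ x, #{S ∈ F | x ∉ S} := sum_card_bipartiteAbove_eq_sum_card_bipartiteBelow _
    _ = N * (N - k).choose k := by
        simp [F, filter_filter, card_consecutiveFree_notMem, ZMod.card]

end ConsecutiveFree

section Table

variable {n : ℕ}

/-- Doubling, as a homomorphism from `ZMod n` to `ZMod (2 * n)`. -/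
def double (n : ℕ) : ZMod n →+ ZMod (2 * n) :=
  ZMod.lift n ⟨zmultiplesHom (ZMod (2 * n)) 2, by
    simpa [mul_comm] using ZMod.natCast_self (2 * n)⟩

lemma double_natCast (k : ℕ) : double n k = 2 * k := by
  rw [double, ← Int.cast_natCast (R := ZMod n), ZMod.lift_coe]
  simp [mul_comm]

lemma double_one : double n 1 = 2 := by
  simpa using double_natCast (n := n) 1

variable [NeZero n]

lemma bijective_double_add : Function.Bijective
    fun p : Bool × ZMod n => double n p.2 + bif p.1 then 1 else 0 := by
  rw [Fintype.bijective_iff_surjective_and_card]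
  refine ⟨fun x => ?_, by simp [ZMod.card]⟩
  rw [← ZMod.natCast_zmod_val x]
  obtain ⟨k, hk | hk⟩ := x.val.even_or_odd'
  · exact ⟨(false, k), by simp [hk, double_natCast]⟩
  · exact ⟨(true, k), by simp [hk, double_natCast]⟩

/-- The seats of a table for `2 * n` people, sorted by parity: `(false, i)` is the even seat `2 i`
and `(true, i)` is the odd seat `2 i + 1`. -/
noncomputable def seatEquiv (n : ℕ) [NeZero n] : Bool × ZMod n ≃ ZMod (2 * n) :=
  Equiv.ofBijective _ bijective_double_add

lemma seatEquiv_false_add_one (i : ZMod n) :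
    seatEquiv n (false, i) + 1 = seatEquiv n (true, i) := by
  simp [seatEquiv]

lemma seatEquiv_true_add_one (i : ZMod n) :
    seatEquiv n (true, i) + 1 = seatEquiv n (false, i + 1) := by
  simp [seatEquiv, double_one, add_assoc, one_add_one_eq_two]

lemma forall_seat {P : ZMod (2 * n) → Prop} :
    (∀ x, P x) ↔ ∀ i, P (seatEquiv n (false, i)) ∧ P (seatEquiv n (true, i)) := by
  simp [← (seatEquiv n).forall_congr_right, Prod.forall, forall_and]

/-- The index of the block of two seats `2 i`, `2 i + 1` that contains a given seat. -/
noncomputable def seatBlock (x : ZMod (2 * n)) : ZMod n :=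
  ((seatEquiv n).symm x).2

@[simp]
lemma seatBlock_seatEquiv (p : Bool × ZMod n) : seatBlock (seatEquiv n p) = p.2 := by
  simp [seatBlock]

end Table

section MenageBoard

variable {n : ℕ}

/-- The forbidden cells of the ménage problem. Number the couples so that couple `i` has a member on
seat `2 i`, and record by the cell `(i, j)` that the other member of couple `j` is on seat
`2 i + 1`: this couple is then seated side by side exactly when `j = i` or `j = i + 1`. -/
def menageBoard (n : ℕ) [NeZero n] : Finset (ZMod n × ZMod n) :=
  {p | p.2 = p.1 ∨ p.2 = p.1 + 1}

variable [NeZero n]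

lemma eq_add_one_of_seatBlock_eq {x y : ZMod (2 * n)} (hxy : x ≠ y)
    (h : seatBlock x = seatBlock y) : y = x + 1 ∨ x = y + 1 := by
  obtain ⟨⟨b, i⟩, rfl⟩ := (seatEquiv n).surjective x
  obtain ⟨⟨c, j⟩, rfl⟩ := (seatEquiv n).surjective y
  obtain rfl : i = j := by simpa using h
  cases b <;> cases c <;> simp_all [seatEquiv_false_add_one]

lemma seatBlock_add_one_eq_or (x : ZMod (2 * n)) :
    seatBlock (x + 1) = seatBlock x ∨ seatBlock (x + 1 + 1) = seatBlock (x + 1) := by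
  obtain ⟨⟨_ | _, i⟩, rfl⟩ := (seatEquiv n).surjective x
  · simp [seatEquiv_false_add_one]
  · simp [seatEquiv_false_add_one, seatEquiv_true_add_one]

lemma injective_menageCell (hn : 1 < n) : Function.Injective
    fun x : ZMod (2 * n) => (seatBlock x, seatBlock (x + 1)) := by
  have : Fact (1 < n) := ⟨hn⟩
  rw [← (seatEquiv n).injective_comp]
  rintro ⟨_ | _, i⟩ ⟨_ | _, j⟩ h <;>
    simp only [Function.comp_apply, seatEquiv_false_add_one, seatEquiv_true_add_one,
      seatBlock_seatEquiv, Prod.mk.injEq] at h <;>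
    obtain ⟨rfl, h⟩ := h <;>
    simp_all only [left_eq_add, add_eq_left, one_ne_zero]

/-- The cells of the ménage board in cyclic order, as the staircase
`(0, 0), (0, 1), (1, 1), (1, 2), …`. -/
noncomputable def menageCell (hn : 1 < n) : ZMod (2 * n) ↪ ZMod n × ZMod n :=
  ⟨fun x => (seatBlock x, seatBlock (x + 1)), injective_menageCell hn⟩

lemma map_menageCell_univ (hn : 1 < n) : univ.map (menageCell hn) = menageBoard n := by
  ext ⟨i, j⟩
  simp only [menageBoard, menageCell, mem_map, mem_univ, true_and, Function.Embedding.coeFn_mk,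
    ← (seatEquiv n).exists_congr_right, Prod.exists, Bool.exists_bool, seatEquiv_false_add_one,
    seatEquiv_true_add_one, seatBlock_seatEquiv, Prod.mk.injEq, mem_filter]
  grind

lemma isNonAttacking_map_menageCell_iff (hn : 1 < n) {S : Finset (ZMod (2 * n))} :
    IsNonAttacking (S.map (menageCell hn)) ↔ IsConsecutiveFree S := by
  have : Fact (1 < 2 * n) := ⟨by lia⟩
  have ne_add_one (x : ZMod (2 * n)) : x + 1 ≠ x := by simp
  simp only [IsNonAttacking, coe_map, Set.InjOn, Set.forall_mem_image, mem_coe,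
    EmbeddingLike.apply_eq_iff_eq]
  constructor
  · rintro ⟨hrow, hcol⟩ x hx hx'
    rcases seatBlock_add_one_eq_or x with h | h
    · exact ne_add_one x (hrow hx' hx h)
    · exact ne_add_one x (hcol hx' hx h)
  · intro hS
    have consecutive_notMem {x y} (hx : x ∈ S) (hy : y ∈ S) : ¬(y = x + 1 ∨ x = y + 1) := by
      rintro (rfl | rfl)
      exacts [hS _ hx hy, hS _ hy hx]
    refine ⟨fun x hx y hy h => ?_, fun x hx y hy h => ?_⟩ <;> by_contra hxy
    · exact consecutive_notMem hx hy (eq_add_one_of_seatBlock_eq hxy h)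
    · refine consecutive_notMem hx hy ?_
      simpa using eq_add_one_of_seatBlock_eq ((add_left_injective 1).ne hxy) h

lemma rookNumber_menageBoard (hn : 1 < n) (k : ℕ) :
    rookNumber (menageBoard n) k =
      #{S ∈ (univ : Finset (ZMod (2 * n))).powersetCard k | IsConsecutiveFree S} := by
  rw [← map_menageCell_univ hn, rookNumber, card_filter_powersetCard_map]
  simp only [isNonAttacking_map_menageCell_iff]

lemma rookNumber_menageBoard_eq (hn : 1 < n) {k : ℕ} (hk : k ≤ n) :
    (rookNumber (menageBoard n) k : ℚ) = 2 * n / (2 * n - k) * (2 * n - k).choose k := by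
  have hpos : (0 : ℚ) < 2 * n - k := by
    rw [sub_pos]; exact_mod_cast (by lia : k < 2 * n)
  have hmul := card_consecutiveFree_zmod_mul (N := 2 * n) k
  rw [← rookNumber_menageBoard hn] at hmul
  rw [div_mul_eq_mul_div, eq_div_iff hpos.ne']
  have := congrArg (Nat.cast : ℕ → ℚ) hmul
  rw [Nat.cast_mul, Nat.cast_mul, Nat.cast_sub (by lia)] at this
  exact_mod_cast this

end MenageBoard

section Seatings

variable {n : ℕ} [NeZero n] {κ : Type*}

lemma exists_eq_prodShear {α₁ α₂ β₁ β₂ : Type*} (t : α₁ × β₁ ≃ α₂ × β₂) (g : α₁ ≃ α₂)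
    (h : ∀ p, (t p).1 = g p.1) : ∃ w : α₁ → β₁ ≃ β₂, t = g.prodShear w := by
  have hinj (a : α₁) : Function.Injective fun b => (t (a, b)).2 := fun b b' hb => by
    simpa using t.injective (Prod.ext ((h (a, b)).trans (h (a, b')).symm) hb)
  have hsurj (a : α₁) : Function.Surjective fun b => (t (a, b)).2 := fun y => by
    obtain ⟨⟨a', b⟩, hb⟩ := t.surjective (g a, y)
    obtain rfl : a' = a := g.injective (by rw [← h (a', b), hb])
    exact ⟨b, congrArg Prod.snd hb⟩
  exact ⟨fun a => Equiv.ofBijective _ ⟨hinj a, hsurj a⟩, Equiv.ext fun p => Prod.ext (h p) rfl⟩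

/-- The seating that puts the gender `g false` on the even seats and `g true` on the odd seats, in
such a way that couple `w i` has a member on seat `2 i` and couple `w (σ i)` on seat `2 i + 1`. -/
noncomputable def seating (g : Perm Bool) (w : ZMod n ≃ κ) (σ : Perm (ZMod n)) :
    ZMod (2 * n) ≃ κ × Bool :=
  (seatEquiv n).symm.trans
    ((g.prodShear fun b => bif b then σ.trans w else w).trans (Equiv.prodComm _ _))

@[simp]
lemma seating_false (g : Perm Bool) (w : ZMod n ≃ κ) (σ : Perm (ZMod n)) (i : ZMod n) :
    seating g w σ (seatEquiv n (false, i)) = (w i, g false) := by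
  simp [seating]

@[simp]
lemma seating_true (g : Perm Bool) (w : ZMod n ≃ κ) (σ : Perm (ZMod n)) (i : ZMod n) :
    seating g w σ (seatEquiv n (true, i)) = (w (σ i), g true) := by
  simp [seating]

lemma injective_seating : Function.Injective
    fun p : Perm Bool × (ZMod n ≃ κ) × Perm (ZMod n) => seating p.1 p.2.1 p.2.2 := by
  rintro ⟨g, w, σ⟩ ⟨g', w', σ'⟩ h
  have hfalse (i : ZMod n) := DFunLike.congr_fun h (seatEquiv n (false, i))
  have htrue (i : ZMod n) := DFunLike.congr_fun h (seatEquiv n (true, i))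
  simp only [seating_false, seating_true, Prod.mk.injEq] at hfalse htrue
  obtain rfl : g = g' := Equiv.ext (Bool.forall_bool.2 ⟨(hfalse 0).2, (htrue 0).2⟩)
  obtain rfl : w = w' := Equiv.ext fun i => (hfalse i).1
  obtain rfl : σ = σ' := Equiv.ext fun i => w.injective (htrue i).1
  rfl

lemma gender_eq_of_alternating {s : ZMod (2 * n) ≃ κ × Bool}
    (hs : ∀ x, (s x).2 ≠ (s (x + 1)).2) (b : Bool) (i : ZMod n) :
    (s (seatEquiv n (b, i))).2 = (s (seatEquiv n (b, 0))).2 := by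
  have periodic : Function.Periodic (fun j => (s (seatEquiv n (b, j))).2) 1 := fun j => by
    have h₁ := hs (seatEquiv n (b, j))
    have h₂ := hs (seatEquiv n (b, j) + 1)
    have two_steps : seatEquiv n (b, j + 1) = seatEquiv n (b, j) + 1 + 1 := by
      cases b <;> simp only [seatEquiv_false_add_one, seatEquiv_true_add_one]
    dsimp only
    rw [two_steps, Bool.eq_not_of_ne h₁, Bool.eq_not_of_ne h₂, Bool.not_not]
  simpa using periodic.nat_mul_eq i.val

lemma exists_seating_eq {s : ZMod (2 * n) ≃ κ × Bool} (hs : ∀ x, (s x).2 ≠ (s (x + 1)).2) :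
    ∃ g w σ, seating g w σ = s := by
  have hne : (s (seatEquiv n (false, 0))).2 ≠ (s (seatEquiv n (true, 0))).2 :=
    seatEquiv_false_add_one (0 : ZMod n) ▸ hs _
  have hinj : Function.Injective fun b => (s (seatEquiv n (b, 0))).2 := by
    rintro (_ | _) (_ | _) h
    exacts [rfl, absurd h hne, absurd h.symm hne, rfl]
  let g : Perm Bool := Equiv.ofBijective _ (Finite.injective_iff_bijective.1 hinj)
  obtain ⟨w, hw⟩ := exists_eq_prodShear
    (((seatEquiv n).trans s).trans (Equiv.prodComm _ _)) g
    fun p => gender_eq_of_alternating hs p.1 p.2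
  have hs_apply (b : Bool) (i : ZMod n) : s (seatEquiv n (b, i)) = (w b i, g b) := by
    simpa using congrArg Prod.swap (DFunLike.congr_fun hw (b, i))
  refine ⟨g, w false, (w true).trans (w false).symm, Equiv.ext (forall_seat.2 fun i => ?_)⟩
  simp [hs_apply]

/-- The condition of the ménage problem: genders alternate and no couple sits on adjacent seats. -/
def IsMenageSeating (s : ZMod (2 * n) ≃ κ × Bool) : Prop :=
  ∀ x, (s x).2 ≠ (s (x + 1)).2 ∧ (s x).1 ≠ (s (x + 1)).1

lemma isMenageSeating_seating_iff {g : Perm Bool} {w : ZMod n ≃ κ} {σ : Perm (ZMod n)} :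
    IsMenageSeating (seating g w σ) ↔ ∀ p ∈ menageBoard n, σ p.1 ≠ p.2 := by
  simp only [IsMenageSeating, forall_seat, seatEquiv_false_add_one, seatEquiv_true_add_one,
    seating_false, seating_true, ne_eq, EmbeddingLike.apply_eq_iff_eq, menageBoard, mem_filter_univ,
    Prod.forall]
  grind

theorem menageNumber_eq_mul_card_perm_avoiding (n : ℕ) [NeZero n] :
    menageNumber n =
      2 * n ! * #{σ : Perm (ZMod n) | ∀ p ∈ menageBoard n, σ p.1 ≠ p.2} := by
  let f : Perm Bool × (ZMod n ≃ Fin n) × Perm (ZMod n) → (ZMod (2 * n) ≃ Fin n × Bool) :=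
    fun p => seating p.1 p.2.1 p.2.2
  have hrange : {s | IsMenageSeating s} ⊆ Set.range f := fun s hs => by
    obtain ⟨g, w, σ, rfl⟩ := exists_seating_eq fun x => (hs x).1
    exact ⟨(g, w, σ), rfl⟩
  have hpreimage : f ⁻¹' {s | IsMenageSeating s} =
      Set.univ ×ˢ Set.univ ×ˢ
        ({σ | ∀ p ∈ menageBoard n, σ p.1 ≠ p.2} : Finset (Perm (ZMod n))) := by
    ext; simp [f, isMenageSeating_seating_iff]
  calc menageNumber n
    _ = {s : ZMod (2 * n) ≃ Fin n × Bool | IsMenageSeating s}.ncard := rfl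
    _ = (f ⁻¹' {s | IsMenageSeating s}).ncard :=
        (Set.ncard_preimage_of_injective_subset_range injective_seating hrange).symm
    _ = _ := by
        have card_places : Nat.card (ZMod n ≃ Fin n) = n ! := by
          rw [Nat.card_eq_fintype_card, Fintype.card_equiv (ZMod.finEquiv n).symm.toEquiv,
            ZMod.card]
        rw [hpreimage, Set.ncard_prod, Set.ncard_prod, Set.ncard_univ, Set.ncard_univ,
          Set.ncard_coe_finset, card_places, Nat.card_perm, ← mul_assoc]
        simp

end Seatings

/-- Touchard's formula: for every integer `n > 1`,
`M_n = 2 n! ∑_{j=0}^n (-1)^j (n-j)! (2n/(2n-j)) binomial(2n-j, j)`. -/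
theorem touchard_formula (n : ℕ) (hn : 1 < n) :
    (menageNumber n : ℚ) =
      2 * (Nat.factorial n : ℚ) *
        ∑ j ∈ Finset.range (n + 1),
          (-1 : ℚ) ^ j * (Nat.factorial (n - j) : ℚ) *
            ((2 * n : ℚ) / (2 * n - j)) * (Nat.choose (2 * n - j) j : ℚ) := by
  have : NeZero n := ⟨by lia⟩
  have rook_expansion := congrArg (Int.cast : ℤ → ℚ) (card_perm_avoiding (menageBoard n))
  push_cast [ZMod.card] at rook_expansion
  rw [menageNumber_eq_mul_card_perm_avoiding]
  push_cast
  rw [rook_expansion]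
  congr 1
  refine sum_congr rfl fun j hj => ?_
  rw [rookNumber_menageBoard_eq hn (mem_range_succ_iff.1 hj)]
  ring
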